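/- (Weyl) Any d-dimensional cone generated by a finite set A ⊆ ℚ^d is the intersection of a finite number of closed half-spaces of ℚ^d, where the boundary hyperplane of each of these half-spaces contains d−1 linearly independent vectors from A. -/

import Mathlib

/-- The cone generated by the finite set `A ⊆ ℚ^d`: all non-negative rational
combinations of elements of `A`. -/
def coneOf (d : ℕ) (A : Finset (Fin d → ℚ)) : Set (Fin d → ℚ) :=
  {x | ∃ c : (Fin d → ℚ) → ℚ, (∀ v, 0 ≤ c v) ∧ x = ∑ v ∈ A, c v • v}

open Module PointedCone

/-!
Everything rests on a sharp form of Farkas' lemma: if `b` is not in the cone generated by the finite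
set `A`, then some linear form `f` with `f ≥ 0` on `A` and `f b < 0` vanishes at so many elements
of `A` that the span of these and `b` contains `A`. One adds the generators one at a time. Let `f`
work for `A`, and let `a` be a new generator. If `a` is not in the span of `A` and `b`, then `f` can
be corrected to vanish at `a` without changing it on `A` and `b`. Otherwise `f` still works unless
`f a < 0`; in that case project along `a` onto `ker f`. Since `f` is nonnegative on `A`, the images
of `A` lie in the new cone, and the image of `b` is `b` minus a positive multiple of `a`. So the
image of `b` is not in the cone generated by the images of `A`; a form `g` that works for these
images gives, composed with the projection, one that works for the new cone.

When `A` spans the space, the kernel of such an `f` is spanned by elements of `A`. Hence `f` is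
determined up to a positive factor by which elements of `A` it annihilates, and there are only
finitely many possibilities for these.
-/

section Separation

variable {K V : Type*} [Field K] [LinearOrder K] [AddCommGroup V] [Module K V]
  {A : Set V} {a b : V} {f : Dual K V}

/-- The linear form `f` separates `b` from the cone generated by `A`, and touches this cone along as
large a face as possible. The size of the face is expressed by a span, which for finite rank means
`rank (insert b A) ≤ rank (A ∩ ker f) + 1`. -/
structure IsTightSeparator (f : Dual K V) (A : Set V) (b : V) : Prop where
  nonneg : ∀ a ∈ A, 0 ≤ f a
  neg : f b < 0
  subset_span : A ⊆ Submodule.span K (insert b (A ∩ f.ker))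

lemma IsTightSeparator.span_insert_eq (h : IsTightSeparator f A b) :
    Submodule.span K (insert b (A ∩ f.ker)) = Submodule.span K (insert b A) :=
  le_antisymm (by gcongr; exact Set.inter_subset_left) <| Submodule.span_le.2 <|
    Set.insert_subset (Submodule.subset_span (Set.mem_insert b _)) h.subset_span

lemma IsTightSeparator.insert_of_mem_span (h : IsTightSeparator f A b)
    (ha : a ∈ Submodule.span K (insert b A)) (hfa : 0 ≤ f a) :
    IsTightSeparator f (insert a A) b where
  nonneg := Set.forall_mem_insert.2 ⟨hfa, h.nonneg⟩
  neg := h.neg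
  subset_span := by
    have hle : Submodule.span K (insert b A) ≤
        Submodule.span K (insert b (insert a A ∩ f.ker)) := by
      rw [← h.span_insert_eq]
      gcongr
      exact Set.subset_insert a A
    exact Set.insert_subset (hle ha) fun x hx ↦
      hle (Submodule.subset_span (Set.mem_insert_of_mem b hx))

lemma IsTightSeparator.exists_insert_of_notMem_span (h : IsTightSeparator f A b)
    (ha : a ∉ Submodule.span K (insert b A)) :
    ∃ g : Dual K V, IsTightSeparator g (insert a A) b := by
  obtain ⟨u, hua, hu⟩ := Submodule.exists_le_ker_of_notMem ha
  have hu_zero : ∀ x ∈ insert b A, u x = 0 := fun x hx ↦ hu (Submodule.subset_span hx)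
  let g : Dual K V := f - (f a / u a) • u
  have hga : g a = 0 := by simp [g, hua]
  have hg_eq : ∀ x ∈ insert b A, g x = f x := fun x hx ↦ by simp [g, hu_zero x hx]
  have hgA : ∀ x ∈ A, g x = f x := fun x hx ↦ hg_eq x (Set.mem_insert_of_mem b hx)
  have hgb : g b = f b := hg_eq b (Set.mem_insert b A)
  have hker : A ∩ f.ker ⊆ insert a A ∩ g.ker := fun x ⟨hxA, hfx⟩ ↦
    ⟨Set.mem_insert_of_mem a hxA, (hgA x hxA).trans hfx⟩
  refine ⟨g, Set.forall_mem_insert.2 ⟨hga.ge, fun x hx ↦ hgA x hx ▸ h.nonneg x hx⟩,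
    hgb ▸ h.neg, Set.insert_subset ?_ (h.subset_span.trans ?_)⟩
  · exact Submodule.subset_span (Set.mem_insert_of_mem b ⟨Set.mem_insert a A, hga⟩)
  · exact Submodule.span_mono (Set.insert_subset_insert hker)

lemma IsTightSeparator.comp {π : V →ₗ[K] V} (hπa : π a = 0)
    (hπ : ∀ x, x - π x ∈ Submodule.span K {a}) (h : IsTightSeparator f (π '' A) (π b)) :
    IsTightSeparator (f ∘ₗ π) (insert a A) b where
  nonneg := Set.forall_mem_insert.2
    ⟨by simp [hπa], fun x hx ↦ h.nonneg (π x) (Set.mem_image_of_mem π hx)⟩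
  neg := h.neg
  subset_span := by
    set S := Submodule.span K (insert b (insert a A ∩ (f ∘ₗ π).ker))
    have hbS : b ∈ S := Submodule.subset_span (Set.mem_insert b _)
    have hkerS : insert a A ∩ (f ∘ₗ π).ker ⊆ S :=
      (Set.subset_insert b _).trans Submodule.subset_span
    have haS : a ∈ S := hkerS ⟨Set.mem_insert a A, by simp [hπa]⟩
    have hsub : ∀ x, x - π x ∈ S := fun x ↦
      (Submodule.span_singleton_le_iff_mem a S).2 haS (hπ x)
    have hπ_mem : ∀ x, π x ∈ S ↔ x ∈ S := fun x ↦
      ⟨fun hx ↦ sub_add_cancel x (π x) ▸ S.add_mem (hsub x) hx,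
        fun hx ↦ sub_sub_cancel x (π x) ▸ S.sub_mem hx (hsub x)⟩
    have hspan_le : Submodule.span K (insert (π b) (π '' A ∩ f.ker)) ≤ S := by
      refine Submodule.span_le.2 (Set.insert_subset ((hπ_mem b).2 hbS) ?_)
      rintro _ ⟨⟨x, hx, rfl⟩, hfx⟩
      exact (hπ_mem x).2 (hkerS ⟨Set.mem_insert_of_mem a hx, hfx⟩)
    exact Set.insert_subset haS fun x hx ↦
      (hπ_mem x).1 (hspan_le (h.subset_span (Set.mem_image_of_mem π hx)))

variable [IsStrictOrderedRing K]

lemma exists_isTightSeparator_empty (hb : b ≠ 0) : ∃ f : Dual K V, IsTightSeparator f ∅ b := by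
  obtain ⟨f, hf⟩ : ∃ f : Dual K V, f b ≠ 0 := by
    simpa using (forall_dual_apply_eq_zero_iff K b).not.2 hb
  have hempty (g : Dual K V) (hg : g b < 0) : IsTightSeparator g ∅ b :=
    ⟨by simp, hg, Set.empty_subset _⟩
  rcases hf.lt_or_gt with hneg | hpos
  · exact ⟨f, hempty f hneg⟩
  · exact ⟨-f, hempty (-f) (by simpa using hpos)⟩

lemma mem_hull_insert_of_mem_hull_image {π : V → V} (hfA : ∀ x ∈ A, 0 ≤ f x)
    (hfa : f a < 0) (hfb : f b < 0) (hπ : ∀ x, π x = x - (f x / f a) • a)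
    (hb : π b ∈ hull K (π '' A)) : b ∈ hull K (insert a A) := by
  have ha : a ∈ hull K (insert a A) := subset_hull (Set.mem_insert a A)
  have hle : hull K (π '' A) ≤ hull K (insert a A) := by
    refine Submodule.span_le.2 (Set.image_subset_iff.2 fun x hx ↦ ?_)
    have hcoeff : 0 ≤ -(f x / f a) :=
      neg_nonneg.2 (div_nonpos_of_nonneg_of_nonpos (hfA x hx) hfa.le)
    rw [Set.mem_preimage, hπ, sub_eq_add_neg, ← neg_smul]
    exact add_mem (subset_hull (Set.mem_insert_of_mem a hx)) (smul_mem _ hcoeff ha)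
  have hb_eq : b = π b + (f b / f a) • a := by rw [hπ, sub_add_cancel]
  rw [hb_eq]
  exact add_mem (hle hb) (smul_mem _ (div_nonneg_of_nonpos hfb.le hfa.le) ha)

/-- The induction needs the generators as the image of a family, because projecting along a new
generator changes the old ones. -/
theorem exists_isTightSeparator_image {ι : Type*} (s : Finset ι) (v : ι → V)
    (hb : b ∉ hull K (v '' s)) : ∃ f : Dual K V, IsTightSeparator f (v '' s) b := by
  classical
  induction s using Finset.induction_on generalizing v b with
  | empty =>
    rw [Finset.coe_empty, Set.image_empty] at hb ⊢
    exact exists_isTightSeparator_empty fun h0 ↦ hb (h0 ▸ zero_mem _)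
  | insert i s _ ih =>
    rw [Finset.coe_insert, Set.image_insert_eq] at hb ⊢
    set a := v i
    obtain ⟨f, hf⟩ := ih v fun h ↦ hb (Submodule.span_mono (Set.subset_insert _ _) h)
    by_cases ha : a ∈ Submodule.span K (insert b (v '' s))
    · rcases le_or_gt 0 (f a) with hfa | hfa
      · exact ⟨f, hf.insert_of_mem_span ha hfa⟩
      let π : V →ₗ[K] V := .id - f.smulRight ((f a)⁻¹ • a)
      have hπ : ∀ x, π x = x - (f x / f a) • a := fun x ↦ by
        simp [π, smul_smul, div_eq_mul_inv]
      have hπb : π b ∉ hull K (π '' (v '' s)) := fun h ↦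
        hb (mem_hull_insert_of_mem_hull_image hf.nonneg hfa hf.neg hπ h)
      rw [← Set.image_comp] at hπb
      obtain ⟨g, hg⟩ := ih (π ∘ v) hπb
      rw [Set.image_comp] at hg
      refine ⟨g ∘ₗ π, hg.comp ?_ fun x ↦ ?_⟩
      · rw [hπ, div_self hfa.ne, one_smul, sub_self]
      · rw [hπ, sub_sub_cancel]
        exact Submodule.smul_mem _ _ (Submodule.mem_span_singleton_self a)
    · exact hf.exists_insert_of_notMem_span ha

end Separation

section FacetNormal

variable {K V : Type*} [Field K] [LinearOrder K] [AddCommGroup V] [Module K V]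
  {A : Set V} {b : V} {f g : Dual K V}

/-- The linear form `f` is an inner normal of a facet of the full-dimensional cone generated by `A`.
A facet is a face that spans a hyperplane, and faces are spanned by generators. -/
structure IsFacetNormal (f : Dual K V) (A : Set V) : Prop where
  ne_zero : f ≠ 0
  nonneg : ∀ a ∈ A, 0 ≤ f a
  ker_le_span : f.ker ≤ Submodule.span K (A ∩ f.ker)

lemma IsTightSeparator.isFacetNormal (h : IsTightSeparator f A b)
    (hA : Submodule.span K A = ⊤) : IsFacetNormal f A where
  ne_zero := by
    rintro rfl
    exact h.neg.false
  nonneg := h.nonneg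
  ker_le_span x hx := by
    have hx_mem : x ∈ Submodule.span K (insert b (A ∩ f.ker)) := by
      rw [h.span_insert_eq]
      exact Submodule.span_mono (Set.subset_insert b A) (hA ▸ Submodule.mem_top)
    obtain ⟨c, y, hy, rfl⟩ := Submodule.mem_span_insert.1 hx_mem
    have hfy : f y = 0 := Submodule.span_le.2 Set.inter_subset_right hy
    have hc : c = 0 := by simpa [hfy, h.neg.ne] using hx
    simpa [hc] using hy

lemma IsFacetNormal.exists_linearIndependent [FiniteDimensional K V] (h : IsFacetNormal f A) :
    ∃ v : Fin (finrank K V - 1) → V, (∀ j, v j ∈ A ∧ f (v j) = 0) ∧ LinearIndependent K v := by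
  have hrank : finrank K V - 1 ≤ finrank K (Submodule.span K (A ∩ f.ker)) := by
    have hker := Dual.finrank_ker_add_one_of_ne_zero h.ne_zero
    have hle := Submodule.finrank_mono h.ker_le_span
    lia
  obtain ⟨v, hv, -, hli⟩ := Submodule.exists_fun_fin_finrank_span_eq K (A ∩ f.ker)
  exact ⟨v ∘ Fin.castLE hrank, fun j ↦ hv _, hli.comp _ (Fin.castLE_injective hrank)⟩

variable [IsStrictOrderedRing K]

lemma IsFacetNormal.exists_nonneg_smul_eq (hg : IsFacetNormal g A)
    (hA : Submodule.span K A = ⊤) (hfA : ∀ a ∈ A, 0 ≤ f a) (hker : A ∩ g.ker ⊆ f.ker) :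
    ∃ c : K, 0 ≤ c ∧ c • g = f := by
  obtain ⟨a, ha, hga⟩ : ∃ a ∈ A, g a ≠ 0 := by
    by_contra! hzero
    exact hg.ne_zero (LinearMap.ext_on hA hzero)
  refine ⟨f a / g a, div_nonneg (hfA a ha) (hg.nonneg a ha), LinearMap.ext fun x ↦ ?_⟩
  have hx : x - (g x / g a) • a ∈ g.ker := by simp [hga]
  have hfx : f x - g x / g a * f a = 0 := by
    simpa using (hg.ker_le_span.trans (Submodule.span_le.2 hker)) hx
  calc f a / g a * g x = g x / g a * f a := by ring
    _ = f x := (sub_eq_zero.1 hfx).symm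

lemma exists_finset_isFacetNormal (hfin : A.Finite) (hA : Submodule.span K A = ⊤) :
    ∃ F : Finset (Dual K V), (∀ g ∈ F, IsFacetNormal g A) ∧
      ∀ f, IsFacetNormal f A → ∃ g ∈ F, ∃ c : K, 0 ≤ c ∧ c • g = f := by
  let Z : Dual K V → Set V := fun f ↦ A ∩ f.ker
  obtain ⟨F, hF, hbij⟩ := Set.exists_subset_bijOn {f : Dual K V | IsFacetNormal f A} Z
  have hZ_fin : (Z '' {f | IsFacetNormal f A}).Finite := hfin.finite_subsets.subset <| by
    rintro _ ⟨f, -, rfl⟩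
    exact Set.inter_subset_left
  have hF_fin : F.Finite := .of_finite_image (hbij.image_eq ▸ hZ_fin) hbij.injOn
  refine ⟨hF_fin.toFinset, fun g hg ↦ hF (hF_fin.mem_toFinset.1 hg), fun f hf ↦ ?_⟩
  obtain ⟨g, hgF, hZ⟩ := hbij.surjOn (Set.mem_image_of_mem Z hf)
  have hker : A ∩ g.ker ⊆ f.ker := hZ.subset.trans Set.inter_subset_right
  exact ⟨g, hF_fin.mem_toFinset.2 hgF, (hF hgF).exists_nonneg_smul_eq hA hf.nonneg hker⟩

theorem mem_hull_iff_of_forall_isFacetNormal {A : Finset V}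
    (hA : Submodule.span K (A : Set V) = ⊤) {x : V} :
    x ∈ hull K (A : Set V) ↔ ∀ f : Dual K V, IsFacetNormal f A → 0 ≤ f x := by
  refine ⟨fun hx f hf ↦ ?_, fun hx ↦ ?_⟩
  · have hle : hull K (A : Set V) ≤ (positive K K).comap f := Submodule.span_le.2 hf.nonneg
    exact hle hx
  · by_contra hx_hull
    rw [← Set.image_id (A : Set V)] at hx_hull
    obtain ⟨f, hf⟩ := exists_isTightSeparator_image A id hx_hull
    rw [Set.image_id] at hf
    exact hf.neg.not_ge (hx f (hf.isFacetNormal hA))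

end FacetNormal

theorem weyl_theorem_general {K V N : Type*} [Field K] [LinearOrder K] [IsStrictOrderedRing K]
    [AddCommGroup V] [Module K V] [AddCommGroup N] [Module K N] {p : N →ₗ[K] V →ₗ[K] K}
    (hp : Function.Surjective p) {d : ℕ} (hd : finrank K V = d) (A : Finset V)
    (hspan : Submodule.span K (A : Set V) = ⊤) :
    ∃ F : Finset N, (∀ n ∈ F, n ≠ 0) ∧ (hull K (A : Set V) : Set V) = {x | ∀ n ∈ F, 0 ≤ p n x} ∧
      ∀ n ∈ F, ∃ v : Fin (d - 1) → V,
        (∀ j, v j ∈ A ∧ p n (v j) = 0) ∧ LinearIndependent K v := by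
  classical
  subst hd
  have : FiniteDimensional K V := ⟨A, hspan⟩
  obtain ⟨F, hF, hF_all⟩ := exists_finset_isFacetNormal A.finite_toSet hspan
  obtain ⟨q, hq⟩ := hp.hasRightInverse
  refine ⟨F.image q, Finset.forall_mem_image.2 fun f hf h0 ↦ (hF f hf).ne_zero ?_,
    Set.ext fun x ↦ ?_, Finset.forall_mem_image.2 fun f hf ↦ ?_⟩
  · rw [← hq f, h0, map_zero]
  · simp only [SetLike.mem_coe, Set.mem_ofPred_eq, Finset.forall_mem_image, hq _,
      mem_hull_iff_of_forall_isFacetNormal hspan]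
    refine ⟨fun h f hf ↦ h f (hF f hf), fun h f hf ↦ ?_⟩
    obtain ⟨g, hg, c, hc, rfl⟩ := hF_all f hf
    exact mul_nonneg hc (h hg)
  · simpa only [hq f, Finset.mem_coe] using (hF f hf).exists_linearIndependent

lemma coneOf_eq_hull (d : ℕ) (A : Finset (Fin d → ℚ)) :
    coneOf d A = hull ℚ (A : Set (Fin d → ℚ)) := by
  ext x
  constructor
  · rintro ⟨c, hc, rfl⟩
    exact sum_mem fun v hv ↦ smul_mem _ (hc v) (subset_hull hv)
  · intro hx
    obtain ⟨c, -, rfl⟩ := Submodule.mem_span_finset.1 hx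
    exact ⟨fun v ↦ c v, fun v ↦ (c v).2, rfl⟩

/-- Weyl, Theorem 12: any `d`-dimensional cone generated by
a finite set `A ⊆ ℚ^d` is the intersection of a finite number of closed
half-spaces, where the boundary of each half-space contains `d-1` linearly
independent vectors from `A`. -/
theorem weyl_theorem
    (d : ℕ) (A : Finset (Fin d → ℚ))
    (hspan : Submodule.span ℚ (A : Set (Fin d → ℚ)) = ⊤) :
    ∃ F : Finset (Fin d → ℚ), (∀ nv ∈ F, nv ≠ 0) ∧
      coneOf d A = {x | ∀ nv ∈ F, 0 ≤ ∑ i, nv i * x i} ∧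
      ∀ nv ∈ F, ∃ g : Fin (d - 1) → (Fin d → ℚ),
        (∀ j, g j ∈ A ∧ ∑ i, nv i * g j i = 0) ∧ LinearIndependent ℚ g := by
  rw [coneOf_eq_hull]
  exact weyl_theorem_general (p := dotProductBilin ℚ ℚ) (dotProductEquiv ℚ (Fin d)).surjective
    (finrank_fin_fun ℚ) A hspan
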